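/- arXiv:2305.13475 — 3 statements merged into one kernel-verified Lean document; each statement's English description precedes it below -/
import Mathlib

section
/- If the stochastic kernel p has uniformly bounded variation with constant C, then for every ρ ∈ L¹(I), Var(Lρ) ≤ C‖ρ‖_{L¹} and ‖Lρ‖_BV ≤ (C+1)‖ρ‖_{L¹}; consequently, for every η ∈ (0,1) the Lasota–Yorke inequality ‖Lρ‖_BV ≤ η‖ρ‖_BV + (C+1)‖ρ‖_{L¹} holds for every ρ of bounded variation. -/
open MeasureTheory Set Filter Topology Metric

/-- The BV norm ‖f‖_BV = Var(f) + ‖f‖_{L¹} on the interval `I`. -/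
noncomputable def BVnorm (I : Set ℝ) (f : ℝ → ℝ) : ℝ :=
  (eVariationOn f I).toReal + ∫ x in I, |f x|

/-- The Markov operator associated to a stochastic kernel `p`:
`(L h)(z) = ∫_I p(x,z) h(x) dx`. -/
noncomputable def MarkovOp (I : Set ℝ) (p : ℝ → ℝ → ℝ) (h : ℝ → ℝ) : ℝ → ℝ :=
  fun z => ∫ x in I, p x z * h x

/-- if the stochastic kernel has uniformly bounded variation with
constant `C`, then `Var(Lρ) ≤ C‖ρ‖₁`, `‖Lρ‖_BV ≤ (C+1)‖ρ‖₁`, and the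
Lasota–Yorke inequality holds for every `η ∈ (0,1)`. -/
theorem stmt2 (i₁ i₂ : ℝ) (hi : i₁ < i₂) (I : Set ℝ) (hI : I = Set.Icc i₁ i₂)
    (p : ℝ → ℝ → ℝ) (hpmeas : Measurable (Function.uncurry p))
    (hp0 : ∀ x z, 0 ≤ p x z)
    (hpdens : ∀ᵐ x ∂(volume.restrict I), ∫ z in I, p x z = 1)
    (C : ℝ) (hC : 0 < C)
    (hpBV : ∀ᵐ x ∂(volume.restrict I), eVariationOn (p x) I ≤ ENNReal.ofReal C) :
    (∀ ρ : ℝ → ℝ, MeasureTheory.IntegrableOn ρ I →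
      eVariationOn (MarkovOp I p ρ) I ≤ ENNReal.ofReal (C * ∫ x in I, |ρ x|) ∧
      BoundedVariationOn (MarkovOp I p ρ) I ∧
      BVnorm I (MarkovOp I p ρ) ≤ (C + 1) * ∫ x in I, |ρ x|) ∧
    (∀ η ∈ Set.Ioo (0:ℝ) 1, ∀ ρ : ℝ → ℝ, MeasureTheory.IntegrableOn ρ I →
      BoundedVariationOn ρ I →
      BVnorm I (MarkovOp I p ρ) ≤ η * BVnorm I ρ + (C + 1) * ∫ x in I, |ρ x|) := by
  have hIm : MeasurableSet I := hI ▸ measurableSet_Icc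
  set μ := (volume.restrict I : Measure ℝ) with hμ
  have hvol : μ.real univ = i₂ - i₁ := by
    rw [hμ, measureReal_restrict_apply_univ, hI, Real.volume_real_Icc_of_le hi.le]
  have : IsFiniteMeasure μ := by
    rw [hμ, hI]; infer_instance
  have hpz : ∀ z, Measurable (fun x => p x z) := fun z =>
    hpmeas.comp (measurable_id.prodMk measurable_const)
  have hlen : 0 < i₂ - i₁ := sub_pos.2 hi
  have hbdd : ∀ᵐ x ∂μ, ∀ z ∈ I, p x z ≤ C + 1 / (i₂ - i₁) := by
    filter_upwards [hpdens, hpBV] with x hx1 hx2 z hz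
    have hInt : Integrable (p x) μ := by
      by_contra h
      rw [integral_undef h] at hx1
      exact zero_ne_one hx1
    have hle : ∀ z' ∈ I, p x z - C ≤ p x z' := by
      intro z' hz'
      have h1 := (eVariationOn.edist_le (p x) hz hz').trans hx2
      rw [edist_dist] at h1
      have h2 := (ENNReal.ofReal_le_ofReal_iff hC.le).1 h1
      rw [Real.dist_eq] at h2
      linarith [le_abs_self (p x z - p x z')]
    have h3 : ∫ z' in I, (p x z - C) ≤ ∫ z' in I, p x z' :=
      setIntegral_mono_on (integrable_const _) hInt hIm hle
    rw [hx1, integral_const, hvol, smul_eq_mul] at h3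
    have : p x z - C ≤ 1 / (i₂ - i₁) := by
      rw [le_div_iff₀ hlen]; linarith
    linarith
  have main : ∀ ρ : ℝ → ℝ, IntegrableOn ρ I →
      eVariationOn (MarkovOp I p ρ) I ≤ ENNReal.ofReal (C * ∫ x in I, |ρ x|) ∧
      BoundedVariationOn (MarkovOp I p ρ) I ∧
      BVnorm I (MarkovOp I p ρ) ≤ (C + 1) * ∫ x in I, |ρ x| := by
    intro ρ hρ
    have hρ' : Integrable ρ μ := hρ
    have hnn : 0 ≤ ∫ x in I, |ρ x| := integral_nonneg fun _ => abs_nonneg _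
    have hnorm : ENNReal.ofReal (∫ x in I, |ρ x|) = ∫⁻ x, ‖ρ x‖ₑ ∂μ :=
      ofReal_integral_norm_eq_lintegral_enorm hρ'
    have hpi : ∀ z ∈ I, Integrable (fun x => p x z * ρ x) μ := by
      intro z hz
      refine hρ'.bdd_mul (hpz z).aestronglyMeasurable (c := C + 1 / (i₂ - i₁)) ?_
      filter_upwards [hbdd] with x hx
      rw [Real.norm_eq_abs, abs_of_nonneg (hp0 x z)]
      exact hx z hz
    have hvar : eVariationOn (MarkovOp I p ρ) I ≤ ENNReal.ofReal (C * ∫ x in I, |ρ x|) := by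
      refine iSup_le ?_
      rintro ⟨n, u, hu, huI⟩
      have hed : ∀ i, edist (MarkovOp I p ρ (u (i+1))) (MarkovOp I p ρ (u i)) ≤
          ∫⁻ x, edist (p x (u (i+1))) (p x (u i)) * ‖ρ x‖ₑ ∂μ := by
        intro i
        rw [edist_eq_enorm_sub]
        unfold MarkovOp
        rw [← integral_sub (hpi _ (huI _)) (hpi _ (huI _))]
        refine (enorm_integral_le_lintegral_enorm _).trans_eq ?_
        refine lintegral_congr fun x => ?_
        rw [← sub_mul, enorm_mul, edist_eq_enorm_sub]
      calc ∑ i ∈ Finset.range n, edist (MarkovOp I p ρ (u (i+1))) (MarkovOp I p ρ (u i))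
          ≤ ∑ i ∈ Finset.range n, ∫⁻ x, edist (p x (u (i+1))) (p x (u i)) * ‖ρ x‖ₑ ∂μ :=
            Finset.sum_le_sum fun i _ => hed i
        _ = ∫⁻ x, ∑ i ∈ Finset.range n, edist (p x (u (i+1))) (p x (u i)) * ‖ρ x‖ₑ ∂μ := by
            rw [lintegral_finsetSum']
            intro i _
            exact ((hpz _).edist (hpz _)).aemeasurable.mul hρ'.aestronglyMeasurable.enorm
        _ ≤ ∫⁻ x, ENNReal.ofReal C * ‖ρ x‖ₑ ∂μ := by
            refine lintegral_mono_ae ?_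
            filter_upwards [hpBV] with x hx
            rw [← Finset.sum_mul]
            gcongr
            exact (eVariationOn.sum_le hu huI).trans hx
        _ = ENNReal.ofReal (C * ∫ x in I, |ρ x|) := by
            rw [lintegral_const_mul' _ _ ENNReal.ofReal_ne_top, ENNReal.ofReal_mul hC.le, hnorm]
    have hL1 : ∫ z in I, |MarkovOp I p ρ z| ≤ ∫ x in I, |ρ x| := by
      by_cases hInt : Integrable (MarkovOp I p ρ) μ
      swap
      · rw [integral_undef]
        · exact hnn
        · intro h
          apply hInt
          have hmeas : AEStronglyMeasurable (MarkovOp I p ρ) μ := by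
            have : AEStronglyMeasurable
                (fun q : ℝ × ℝ => p q.2 q.1 * ρ q.2) (μ.prod μ) :=
              (hpmeas.comp measurable_swap).aestronglyMeasurable.mul
                hρ'.aestronglyMeasurable.comp_snd
            exact this.integral_prod_right'
          exact (integrable_norm_iff hmeas).1 h
      rw [← ENNReal.ofReal_le_ofReal_iff hnn, hnorm]
      have h1 : ENNReal.ofReal (∫ z in I, |MarkovOp I p ρ z|)
          = ∫⁻ z, ‖MarkovOp I p ρ z‖ₑ ∂μ := ofReal_integral_norm_eq_lintegral_enorm hInt
      rw [h1]
      calc ∫⁻ z, ‖MarkovOp I p ρ z‖ₑ ∂μ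
          ≤ ∫⁻ z, ∫⁻ x, ‖p x z * ρ x‖ₑ ∂μ ∂μ :=
            lintegral_mono fun z => enorm_integral_le_lintegral_enorm _
        _ = ∫⁻ x, ∫⁻ z, ‖p x z * ρ x‖ₑ ∂μ ∂μ := by
            apply lintegral_lintegral_swap
            have : AEStronglyMeasurable
                (fun q : ℝ × ℝ => p q.2 q.1 * ρ q.2) (μ.prod μ) :=
              (hpmeas.comp measurable_swap).aestronglyMeasurable.mul
                hρ'.aestronglyMeasurable.comp_snd
            exact this.enorm
        _ = ∫⁻ x, ‖ρ x‖ₑ ∂μ := by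
            refine lintegral_congr_ae ?_
            filter_upwards [hpdens] with x hx
            have hInt : Integrable (p x) μ := by
              by_contra h
              rw [integral_undef h] at hx
              exact zero_ne_one hx
            have h2 : ∫⁻ z, ‖p x z‖ₑ ∂μ = 1 := by
              rw [← ofReal_integral_norm_eq_lintegral_enorm hInt]
              simp only [Real.norm_eq_abs, abs_of_nonneg (hp0 _ _)]
              rw [hx, ENNReal.ofReal_one]
            simp only [enorm_mul]
            rw [lintegral_mul_const' _ _ enorm_ne_top, h2, one_mul]
    refine ⟨hvar, ne_top_of_le_ne_top ENNReal.ofReal_ne_top hvar, ?_⟩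
    have h4 := ENNReal.toReal_mono ENNReal.ofReal_ne_top hvar
    rw [ENNReal.toReal_ofReal (mul_nonneg hC.le hnn)] at h4
    unfold BVnorm
    linarith
  refine ⟨main, fun η hη ρ hρ _ => ?_⟩
  have h1 := (main ρ hρ).2.2
  have h2 : 0 ≤ BVnorm I ρ :=
    add_nonneg ENNReal.toReal_nonneg (integral_nonneg fun _ => abs_nonneg _)
  have := mul_nonneg hη.1.le h2
  linarith
end

section
/- For every k ≥ 0 and every ball B with μ(B) > 0, the cluster quantity satisfies q_{k,B} ≤ ℙ(X_0 ∈ B, X_{k+1} ∈ B)/μ(B) ≤ c·Leb(B). Consequently, if B_t(z) are balls around z with Leb(B_t(z)) → 0 as t → ∞, then q_k := lim_{t→∞} q_{k,B_t(z)} = 0 for every k, and hence the extremal index θ = 1 − Σ_{k=0}^∞ q_k equals 1. -/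
open MeasureTheory Set Filter Topology Metric

/-- Iterated transition integral of a Markov chain with transition density
`p` on `I`. -/
noncomputable def chainInt (I : Set ℝ) (p : ℝ → ℝ → ℝ) : List (Set ℝ) → ℝ → ℝ
  | [], _ => 1
  | A :: rest, x => ∫ y in A ∩ I, p x y * chainInt I p rest y

/-- Finite-dimensional distributions of the stationary Markov chain with
initial density `h` and transition density `p`:
`chainProb [A₀,…,A_t] = ℙ(X₀ ∈ A₀, …, X_t ∈ A_t)`. -/
noncomputable def chainProb (I : Set ℝ) (h : ℝ → ℝ) (p : ℝ → ℝ → ℝ) :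
    List (Set ℝ) → ℝ
  | [] => 1
  | A :: rest => ∫ x in A ∩ I, h x * chainInt I p rest x

/-- The stationary measure `μ = h · Leb` restricted to `I`. -/
noncomputable def statMeas (I : Set ℝ) (h : ℝ → ℝ) : Measure ℝ :=
  (volume.restrict I).withDensity (fun x => ENNReal.ofReal (h x))

/-- The cluster quantity
`q_{k,B} = ℙ(X₀ ∈ B, X₁ ∉ B, …, X_k ∉ B, X_{k+1} ∈ B)/μ(B)`. -/
noncomputable def clusterQ (I : Set ℝ) (h : ℝ → ℝ) (p : ℝ → ℝ → ℝ)
    (k : ℕ) (B : Set ℝ) : ℝ :=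
  chainProb I h p (B :: (List.replicate k Bᶜ ++ [B])) /
    (statMeas I h B).toReal

theorem chain_good (I : Set ℝ) (hIm : MeasurableSet I) (hIf : volume I < ⊤)
    (p : ℝ → ℝ → ℝ) (hpmeas : Measurable (Function.uncurry p))
    (hp0 : ∀ x z, 0 ≤ p x z) (c : ℝ) (hc : 0 < c) (hpbd : ∀ x z, p x z ≤ c)
    (l : List (Set ℝ)) :
    Measurable (chainInt I p l) ∧ (∀ x, 0 ≤ chainInt I p l x) ∧
      ∃ M, 0 ≤ M ∧ ∀ x, chainInt I p l x ≤ M := by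
  induction l with
  | nil => exact ⟨measurable_const, fun _ => zero_le_one, 1, zero_le_one, fun _ => le_rfl⟩
  | cons A l ih =>
    obtain ⟨hm, h0, M, hM0, hM⟩ := ih
    refine ⟨?_, ?_, c * M * (volume (A ∩ I)).toReal, by positivity, ?_⟩
    · have : StronglyMeasurable (Function.uncurry fun x y => p x y * chainInt I p l y) :=
        (hpmeas.mul (hm.comp measurable_snd)).stronglyMeasurable
      exact (this.integral_prod_right (ν := volume.restrict (A ∩ I))).measurable
    · intro x
      exact integral_nonneg fun y => mul_nonneg (hp0 x y) (h0 y)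
    · intro x
      have hf : volume (A ∩ I) < ⊤ := (measure_mono inter_subset_right).trans_lt hIf
      have := norm_setIntegral_le_of_norm_le_const (μ := volume) (s := A ∩ I)
        (f := fun y => p x y * chainInt I p l y) (C := c * M) hf (fun y _ => by
          rw [Real.norm_of_nonneg (mul_nonneg (hp0 x y) (h0 y))]
          exact mul_le_mul (hpbd x y) (hM y) (h0 y) hc.le)
      exact (le_abs_self _).trans this

theorem chain_integrable (I : Set ℝ) (hIm : MeasurableSet I) (hIf : volume I < ⊤)
    (p : ℝ → ℝ → ℝ) (hpmeas : Measurable (Function.uncurry p))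
    (hp0 : ∀ x z, 0 ≤ p x z) (c : ℝ) (hc : 0 < c) (hpbd : ∀ x z, p x z ≤ c)
    (l : List (Set ℝ)) (f : ℝ → ℝ) (A : Set ℝ)
    (hf : IntegrableOn f A) :
    IntegrableOn (fun y => f y * chainInt I p l y) A := by
  obtain ⟨hm, h0, M, hM0, hM⟩ := chain_good I hIm hIf p hpmeas hp0 c hc hpbd l
  refine Integrable.mul_bdd hf hm.aestronglyMeasurable (c := M) (Eventually.of_forall fun y => ?_)
  rw [Real.norm_of_nonneg (h0 y)]
  exact hM y

theorem p_integrable (p : ℝ → ℝ → ℝ) (hpmeas : Measurable (Function.uncurry p))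
    (hp0 : ∀ x z, 0 ≤ p x z) (c : ℝ) (hpbd : ∀ x z, p x z ≤ c)
    (A : Set ℝ) (hA : volume A < ⊤) (x : ℝ) : IntegrableOn (p x) A := by
  have hm : Measurable (p x) := hpmeas.comp measurable_prodMk_left
  refine Measure.integrableOn_of_bounded (M := c) hA.ne hm.aestronglyMeasurable
    (Eventually.of_forall fun y => ?_)
  rw [Real.norm_of_nonneg (hp0 x y)]
  exact hpbd x y

/-- `q_{k,B} ≤ ℙ(X₀∈B, X_{k+1}∈B)/μ(B) ≤ c·Leb(B)`; hence for
balls `B_t(z)` with `Leb(B_t(z)) → 0`, `q_k = lim_t q_{k,B_t(z)} = 0` for all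
`k`, and the extremal index `θ = 1 − Σ_k q_k` equals `1`. -/
theorem stmt16
    (i₁ i₂ : ℝ) (hi : i₁ < i₂)
    (I : Set ℝ) (hI : I = Set.Icc i₁ i₂)
    (p : ℝ → ℝ → ℝ) (hpmeas : Measurable (Function.uncurry p))
    (hp0 : ∀ x z, 0 ≤ p x z)
    (c : ℝ) (hc : 0 < c) (hpbd : ∀ x z, p x z ≤ c)
    (hpdens : ∀ᵐ x ∂(volume.restrict I), ∫ z in I, p x z = 1)
    -- stationary density h of the chain
    (h : ℝ → ℝ) (hh : MeasureTheory.IntegrableOn h I) (hh0 : ∀ x, 0 ≤ h x)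
    (hh1 : (∫ x in I, h x) = 1)
    (hstat : ∀ᵐ z ∂(volume.restrict I), MarkovOp I p h z = h z) :
    (∀ (k : ℕ) (B : Set ℝ), MeasurableSet B → B ⊆ I → 0 < statMeas I h B →
      clusterQ I h p k B ≤
        chainProb I h p (B :: (List.replicate k Set.univ ++ [B])) /
          (statMeas I h B).toReal ∧
      chainProb I h p (B :: (List.replicate k Set.univ ++ [B])) /
          (statMeas I h B).toReal ≤ c * (volume B).toReal) ∧
    (∀ (z : ℝ) (Bt : ℕ → Set ℝ),
      (∀ t, (∃ r : ℝ, 0 < r ∧ Bt t = Metric.ball z r) ∧ Bt t ⊆ I ∧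
        0 < statMeas I h (Bt t)) →
      Tendsto (fun t => (volume (Bt t)).toReal) atTop (𝓝 0) →
      (∀ k : ℕ, Tendsto (fun t => clusterQ I h p k (Bt t)) atTop (𝓝 0)) ∧
      (∀ q : ℕ → ℝ,
        (∀ k, Tendsto (fun t => clusterQ I h p k (Bt t)) atTop (𝓝 (q k))) →
        1 - ∑' k : ℕ, q k = 1)) := by
  have hIm : MeasurableSet I := hI ▸ measurableSet_Icc
  have hIf : volume I < ⊤ := by rw [hI]; exact measure_Icc_lt_top
  have good := chain_good I hIm hIf p hpmeas hp0 c hc hpbd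
  have cint := chain_integrable I hIm hIf p hpmeas hp0 c hc hpbd
  have pint := p_integrable p hpmeas hp0 c hpbd
  have hfin : ∀ A : Set ℝ, volume (A ∩ I) < ⊤ := fun A =>
    (measure_mono inter_subset_right).trans_lt hIf
  have mono : ∀ (B : Set ℝ) (k : ℕ) (x : ℝ),
      chainInt I p (List.replicate k Bᶜ ++ [B]) x ≤
        chainInt I p (List.replicate k Set.univ ++ [B]) x := by
    intro B k
    induction k with
    | zero => intro x; exact le_rfl
    | succ k ih =>
      intro x
      simp only [List.replicate_succ, List.cons_append, chainInt]
      calc _ ≤ ∫ y in Bᶜ ∩ I, p x y * chainInt I p (List.replicate k Set.univ ++ [B]) y :=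
            integral_mono (cint _ _ _ (pint _ (hfin _) x)) (cint _ _ _ (pint _ (hfin _) x))
              (fun y => mul_le_mul_of_nonneg_left (ih y) (hp0 x y))
        _ ≤ _ := setIntegral_mono_set (cint _ _ _ (pint _ (hfin _) x))
              (Eventually.of_forall fun y => mul_nonneg (hp0 x y) ((good _).2.1 y))
              (inter_subset_inter_left _ (subset_univ _)).eventuallyLE
  have bd : ∀ (B : Set ℝ), B ⊆ I → ∀ k : ℕ, ∀ᵐ x ∂(volume.restrict I),
      chainInt I p (List.replicate k Set.univ ++ [B]) x ≤ c * (volume B).toReal := by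
    intro B hBI k
    induction k with
    | zero =>
      refine Eventually.of_forall fun x => ?_
      simp only [List.replicate_zero, List.nil_append, chainInt, mul_one]
      rw [inter_eq_left.mpr hBI]
      have := norm_setIntegral_le_of_norm_le_const (μ := volume) (s := B)
        (f := fun y => p x y) (C := c) ((measure_mono hBI).trans_lt hIf) (fun y _ => by
          rw [Real.norm_of_nonneg (hp0 x y)]
          exact hpbd x y)
      exact (le_abs_self _).trans this
    | succ k ih =>
      filter_upwards [hpdens] with x hx
      simp only [List.replicate_succ, List.cons_append, chainInt, univ_inter]
      calc _ ≤ ∫ y in I, p x y * (c * (volume B).toReal) := by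
            refine integral_mono_ae (cint _ _ _ (pint _ hIf x)) ((pint _ hIf x).mul_const _) ?_
            filter_upwards [ih] with y hy
            exact mul_le_mul_of_nonneg_left hy (hp0 x y)
        _ = _ := by rw [integral_mul_const, hx, one_mul]
  have statEq : ∀ B : Set ℝ, MeasurableSet B → B ⊆ I →
      statMeas I h B = ENNReal.ofReal (∫ x in B, h x) := by
    intro B hB hBI
    rw [statMeas, withDensity_apply _ hB, Measure.restrict_restrict hB, inter_eq_left.mpr hBI,
      ofReal_integral_eq_lintegral_ofReal (hh.mono_set hBI) (Eventually.of_forall hh0)]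
  have main : ∀ (k : ℕ) (B : Set ℝ), MeasurableSet B → B ⊆ I → 0 < statMeas I h B →
      clusterQ I h p k B ≤
        chainProb I h p (B :: (List.replicate k Set.univ ++ [B])) /
          (statMeas I h B).toReal ∧
      chainProb I h p (B :: (List.replicate k Set.univ ++ [B])) /
          (statMeas I h B).toReal ≤ c * (volume B).toReal := by
    intro k B hB hBI hpos
    have hhB : IntegrableOn h B := hh.mono_set hBI
    rw [clusterQ]
    rw [statEq B hB hBI] at hpos ⊢
    have hpos' := ENNReal.ofReal_pos.mp hpos
    rw [ENNReal.toReal_ofReal hpos'.le]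
    simp only [chainProb, inter_eq_left.mpr hBI]
    constructor
    · refine div_le_div_of_nonneg_right ?_ hpos'.le
      exact integral_mono (cint _ _ _ hhB) (cint _ _ _ hhB)
        (fun x => mul_le_mul_of_nonneg_left (mono B k x) (hh0 x))
    · rw [div_le_iff₀ hpos']
      calc _ ≤ ∫ x in B, h x * (c * (volume B).toReal) := by
            refine integral_mono_ae (cint _ _ _ hhB) (hhB.mul_const _) ?_
            filter_upwards [ae_restrict_of_ae_restrict_of_subset hBI (bd B hBI k)] with y hy
            exact mul_le_mul_of_nonneg_left hy (hh0 y)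
        _ = _ := by rw [integral_mul_const, mul_comm]
  refine ⟨main, ?_⟩
  intro z Bt hBt hvol
  have lim : ∀ k : ℕ, Tendsto (fun t => clusterQ I h p k (Bt t)) atTop (𝓝 0) := by
    intro k
    refine squeeze_zero (g := fun t => c * (volume (Bt t)).toReal) ?_ ?_ ?_
    · intro t
      refine div_nonneg ?_ ENNReal.toReal_nonneg
      exact integral_nonneg fun x => mul_nonneg (hh0 x) ((good _).2.1 x)
    · intro t
      obtain ⟨⟨r, _, hr⟩, hsub, hp⟩ := hBt t
      have := main k (Bt t) (hr ▸ measurableSet_ball) hsub hp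
      exact this.1.trans this.2
    · simpa using hvol.const_mul c
  refine ⟨lim, ?_⟩
  intro q hq
  have : ∀ k, q k = 0 := fun k => tendsto_nhds_unique (hq k) (lim k)
  simp [this]
end

section
/- There exists γ₀* > 0 such that for every γ₀ ≥ γ₀*, sup_{u ∈ [0,1)} |T(u)| < 1, i.e. the leverage map T maps [0,1) into an interval strictly inside (−1,1). -/
open Set

/-- for the deterministic leverage map
`T(u) = (A(u) − 1)/(γ₀ + c·A(u))` with
`A(u) = (1 + γ₀u)/√(ω(1 − cu)² + Σ̄(1 + γ₀u)²/(1 − u)²)`, there exists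
`γ₀* > 0` such that for every `γ₀ ≥ γ₀*`, `sup_{u ∈ [0,1)} |T(u)| < 1`. -/
theorem stmt19
    (ω c Sb : ℝ) (hω : ω ∈ Set.Ico (0:ℝ) 1) (hc : c ∈ Set.Icc (-1:ℝ) 1)
    (hS : 0 < Sb) (hwS : 0 < ω + Sb) :
    ∃ γstar > 0, ∀ γ₀ ≥ γstar, ∃ M < (1:ℝ), ∀ u ∈ Set.Ico (0:ℝ) 1,
      |((1 + γ₀*u) / Real.sqrt (ω*(1 - c*u)^2 + Sb*(1 + γ₀*u)^2/(1 - u)^2) - 1) /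
          (γ₀ + c * ((1 + γ₀*u) /
            Real.sqrt (ω*(1 - c*u)^2 + Sb*(1 + γ₀*u)^2/(1 - u)^2)))| ≤ M := by
  obtain ⟨hω0, -⟩ := hω
  obtain ⟨hc1, hc2⟩ := hc
  have hs : 0 < Real.sqrt Sb := Real.sqrt_pos.mpr hS
  have hK : 0 < 1 / Real.sqrt Sb := by positivity
  refine ⟨3 * (1 / Real.sqrt Sb) + 3, by positivity, fun γ hγ => ⟨1 / 2, by norm_num, ?_⟩⟩
  rintro u ⟨hu0, hu1⟩
  have hγ0 : 0 < γ := by linarith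
  have hp : 0 < 1 + γ * u := by positivity
  have hu : 0 < 1 - u := by linarith
  have h1 : Sb * (1 + γ * u) ^ 2 ≤ Sb * (1 + γ * u) ^ 2 / (1 - u) ^ 2 := by
    rw [le_div_iff₀ (by positivity)]
    have : (1 - u) ^ 2 ≤ 1 := by nlinarith
    exact mul_le_of_le_one_right (by positivity) this
  have h2 : Real.sqrt Sb * (1 + γ * u) ≤
      Real.sqrt (ω * (1 - c * u) ^ 2 + Sb * (1 + γ * u) ^ 2 / (1 - u) ^ 2) := by
    apply Real.le_sqrt_of_sq_le
    rw [mul_pow, Real.sq_sqrt hS.le]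
    have : 0 ≤ ω * (1 - c * u) ^ 2 := by positivity
    linarith
  have hA0 : 0 ≤ (1 + γ * u) /
      Real.sqrt (ω * (1 - c * u) ^ 2 + Sb * (1 + γ * u) ^ 2 / (1 - u) ^ 2) := by positivity
  have hA1 : (1 + γ * u) /
      Real.sqrt (ω * (1 - c * u) ^ 2 + Sb * (1 + γ * u) ^ 2 / (1 - u) ^ 2)
        ≤ 1 / Real.sqrt Sb := by
    rw [div_le_div_iff₀ (lt_of_lt_of_le (by positivity) h2) hs]
    linarith
  generalize (1 + γ * u) /
      Real.sqrt (ω * (1 - c * u) ^ 2 + Sb * (1 + γ * u) ^ 2 / (1 - u) ^ 2) = A at *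
  generalize 1 / Real.sqrt Sb = K at *
  have hcA : -A ≤ c * A := by nlinarith
  have hD : 0 < γ + c * A := by linarith
  rw [abs_div, abs_of_pos hD, div_le_iff₀ hD, abs_le]
  constructor <;> linarith
end
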